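/- Let φ : ℝⁿ → ℝ be semiconvex. Then φ is twice differentiable almost everywhere in the sense of Aleksandrov: for Lebesgue-almost every x₀ ∈ ℝⁿ there exist a vector p ∈ ℝⁿ and a symmetric matrix A such that φ(x) = φ(x₀) + ⟨p, x - x₀⟩ + (1/2)⟨A(x - x₀), x - x₀⟩ + o(|x - x₀|²) as x → x₀. -/

import Mathlib

/-!
Adding a multiple of `‖x‖²` reduces the theorem to a convex function `f`. Its proximal map
`P = (I + ∂f)⁻¹` is defined everywhere and, by monotonicity of `∂f`, firmly nonexpansive. By
Rademacher's theorem and Sard's lemma almost every `x` is a regular value of the Lipschitz map `P`.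
If `G` is a selection of `∂f`, then `I + G` is a right inverse of `P`; firm nonexpansiveness forces
it to be continuous at the regular values, hence differentiable there, and so is `G`. Since `f` is
the integral of `G` along segments, the first order expansion of `G` at `x` integrates to a second
order expansion of `f`.
-/

open scoped RealInnerProductSpace
open MeasureTheory Filter Topology Asymptotics Metric Set

noncomputable section

abbrev Eucl (d : ℕ) := EuclideanSpace ℝ (Fin d)

open Classical in
noncomputable def eigs {d : ℕ} (M : Matrix (Fin d) (Fin d) ℝ) : Fin d → ℝ :=
  if h : M.IsHermitian then h.eigenvalues else 0

noncomputable def specNorm {d : ℕ} (M : Matrix (Fin d) (Fin d) ℝ) : ℝ := ⨆ i, |eigs M i|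
noncomputable def posPartNorm {d : ℕ} (M : Matrix (Fin d) (Fin d) ℝ) : ℝ := ⨆ i, max (eigs M i) 0
noncomputable def negPartNorm {d : ℕ} (M : Matrix (Fin d) (Fin d) ℝ) : ℝ := ⨆ i, max (-(eigs M i)) 0
noncomputable def posPartTrace {d : ℕ} (M : Matrix (Fin d) (Fin d) ℝ) : ℝ := ∑ i, max (eigs M i) 0
noncomputable def negPartTrace {d : ℕ} (M : Matrix (Fin d) (Fin d) ℝ) : ℝ := ∑ i, max (-(eigs M i)) 0

noncomputable def pucciPlus {d : ℕ} (lam Lam : ℝ) (M : Matrix (Fin d) (Fin d) ℝ) : ℝ :=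
  -lam * posPartTrace M + Lam * negPartTrace M

noncomputable def pucciMinus {d : ℕ} (lam Lam : ℝ) (M : Matrix (Fin d) (Fin d) ℝ) : ℝ :=
  -Lam * posPartTrace M + lam * negPartTrace M

noncomputable def gradAt {d : ℕ} (φ : Eucl d → ℝ) (x : Eucl d) : Eucl d :=
  (EuclideanSpace.equiv (Fin d) ℝ).symm (fun i => fderiv ℝ φ x (EuclideanSpace.single i 1))

noncomputable def hessAt {d : ℕ} (φ : Eucl d → ℝ) (x : Eucl d) : Matrix (Fin d) (Fin d) ℝ :=
  Matrix.of fun i j =>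
    fderiv ℝ (fun y => fderiv ℝ φ y (EuclideanSpace.single j 1)) x (EuclideanSpace.single i 1)

noncomputable def quadForm {d : ℕ} (M : Matrix (Fin d) (Fin d) ℝ) (v : Eucl d) : ℝ :=
  ∑ i, ∑ j, M i j * v i * v j

def ViscSubsol {d : ℕ} (Ω : Set (Eucl d))
    (G : Matrix (Fin d) (Fin d) ℝ → Eucl d → ℝ → Eucl d → ℝ)
    (g : Eucl d → ℝ) (u : Eucl d → ℝ) : Prop :=
  ∀ x₀ ∈ Ω, ∀ φ : Eucl d → ℝ, ContDiffAt ℝ 2 φ x₀ →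
    IsLocalMax (fun x => u x - φ x) x₀ →
    G (hessAt φ x₀) (gradAt φ x₀) (u x₀) x₀ ≤ g x₀

def ViscSupersol {d : ℕ} (Ω : Set (Eucl d))
    (G : Matrix (Fin d) (Fin d) ℝ → Eucl d → ℝ → Eucl d → ℝ)
    (g : Eucl d → ℝ) (u : Eucl d → ℝ) : Prop :=
  ∀ x₀ ∈ Ω, ∀ φ : Eucl d → ℝ, ContDiffAt ℝ 2 φ x₀ →
    IsLocalMin (fun x => u x - φ x) x₀ →
    g x₀ ≤ G (hessAt φ x₀) (gradAt φ x₀) (u x₀) x₀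

def ViscSol {d : ℕ} (Ω : Set (Eucl d))
    (G : Matrix (Fin d) (Fin d) ℝ → Eucl d → ℝ → Eucl d → ℝ)
    (g : Eucl d → ℝ) (u : Eucl d → ℝ) : Prop :=
  ViscSubsol Ω G g u ∧ ViscSupersol Ω G g u

def UniformlyElliptic {d : ℕ} (lam Lam : ℝ) (X : Set (Eucl d)) (Tset : Set ℝ)
    (F : Matrix (Fin d) (Fin d) ℝ → Eucl d → ℝ → Eucl d → ℝ → ℝ) : Prop :=
  ∀ M N : Matrix (Fin d) (Fin d) ℝ, M.IsSymm → N.PosSemidef →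
    ∀ (P : Eucl d) (v : ℝ), ∀ x ∈ X, ∀ t ∈ Tset,
      -Lam * specNorm N ≤ F (M + N) P v x t - F M P v x t ∧
      F (M + N) P v x t - F M P v x t ≤ -lam * specNorm N

def IsModulus (σ : ℝ → ℝ) : Prop := Monotone σ ∧ Continuous σ ∧ σ 0 = 0

def StructureCondition {d : ℕ} (lam Lam gam : ℝ) (ω : ℝ → ℝ → ℝ)
    (X : Set (Eucl d)) (Tset : Set ℝ)
    (F : Matrix (Fin d) (Fin d) ℝ → Eucl d → ℝ → Eucl d → ℝ → ℝ) : Prop :=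
  (∀ R > 0, IsModulus (ω R)) ∧
  ∀ R > 0, ∀ M N : Matrix (Fin d) (Fin d) ℝ, M.IsSymm → N.IsSymm →
    ∀ (P Q : Eucl d) (r s : ℝ), |r| ≤ R → |s| ≤ R → ∀ x ∈ X, ∀ t ∈ Tset,
      pucciMinus lam Lam (M - N) - gam * ‖P - Q‖ - ω R (max (s - r) 0)
          ≤ F M P r x t - F N Q s x t ∧
      F M P r x t - F N Q s x t
          ≤ pucciPlus lam Lam (M - N) + gam * ‖P - Q‖ + ω R (max (r - s) 0)

noncomputable def supConv {d : ℕ} (Ω : Set (Eucl d)) (u : Eucl d → ℝ) (ε : ℝ) (x : Eucl d) : ℝ :=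
  sSup ((fun y => u y - ‖x - y‖ ^ 2 / (2 * ε)) '' closure Ω)

noncomputable def infConv {d : ℕ} (Ω : Set (Eucl d)) (u : Eucl d → ℝ) (ε : ℝ) (x : Eucl d) : ℝ :=
  sInf ((fun y => u y + ‖x - y‖ ^ 2 / (2 * ε)) '' closure Ω)

noncomputable def supNorm {d : ℕ} (Ω : Set (Eucl d)) (u : Eucl d → ℝ) : ℝ :=
  sSup ((fun y => |u y|) '' closure Ω)

def RotheStep {d : ℕ} (Ω : Set (Eucl d))
    (F : Matrix (Fin d) (Fin d) ℝ → Eucl d → ℝ → Eucl d → ℝ → ℝ)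
    (h : ℝ) (m : ℕ) (zprev znext : Eucl d → ℝ) : Prop :=
  ContinuousOn znext (closure Ω) ∧
  ViscSol Ω (fun M P r x => F M P r x ((m + 1) * h) + r / h) (fun x => zprev x / h) znext ∧
  ∀ x ∈ frontier Ω, znext x = 0

noncomputable def rotheInterp {d : ℕ} (z : ℕ → Eucl d → ℝ) (h : ℝ) (x : Eucl d) (t : ℝ) : ℝ :=
  ((⌊t / h⌋₊ + 1 : ℝ) * h - t) / h * z ⌊t / h⌋₊ x + (t - (⌊t / h⌋₊ : ℝ) * h) / h * z (⌊t / h⌋₊ + 1) x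

def HasSmoothBoundary {d : ℕ} (Ω : Set (Eucl d)) : Prop :=
  ∃ f : Eucl d → ℝ, ContDiff ℝ (⊤ : ℕ∞) f ∧ Ω = {x | f x < 0} ∧ ∀ x ∈ frontier Ω, fderiv ℝ f x ≠ 0

def C21 {d : ℕ} (φ : Eucl d → ℝ → ℝ) : Prop :=
  (∀ t, ContDiff ℝ 2 fun x => φ x t) ∧
  (∀ x, ContDiff ℝ 1 fun t => φ x t) ∧
  Continuous (fun p : Eucl d × ℝ => φ p.1 p.2) ∧
  Continuous (fun p : Eucl d × ℝ => hessAt (fun x => φ x p.2) p.1) ∧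
  Continuous (fun p : Eucl d × ℝ => gradAt (fun x => φ x p.2) p.1) ∧
  Continuous (fun p : Eucl d × ℝ => deriv (φ p.1) p.2)

def ParabolicViscSubsol {d : ℕ} (Ω : Set (Eucl d)) (T : ℝ)
    (F : Matrix (Fin d) (Fin d) ℝ → Eucl d → ℝ → Eucl d → ℝ → ℝ)
    (u : Eucl d × ℝ → ℝ) : Prop :=
  ∀ φ : Eucl d → ℝ → ℝ, C21 φ → ∀ ε > (0:ℝ),
    (∀ x ∈ closure Ω, ∀ t ∈ Icc (0:ℝ) T,
      ε ≤ deriv (φ x) t +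
        F (hessAt (fun y => φ y t) x) (gradAt (fun y => φ y t) x) (φ x t) x t) →
    ¬ ∃ p ∈ Ω ×ˢ Ioc (0:ℝ) T,
        IsLocalMaxOn (fun q : Eucl d × ℝ => u q - φ q.1 q.2) (Ω ×ˢ Ioc (0:ℝ) T) p ∧
        u p - φ p.1 p.2 = 0

def ParabolicViscSupersol {d : ℕ} (Ω : Set (Eucl d)) (T : ℝ)
    (F : Matrix (Fin d) (Fin d) ℝ → Eucl d → ℝ → Eucl d → ℝ → ℝ)
    (u : Eucl d × ℝ → ℝ) : Prop :=
  ∀ φ : Eucl d → ℝ → ℝ, C21 φ → ∀ ε > (0:ℝ),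
    (∀ x ∈ closure Ω, ∀ t ∈ Icc (0:ℝ) T,
      deriv (φ x) t +
        F (hessAt (fun y => φ y t) x) (gradAt (fun y => φ y t) x) (φ x t) x t ≤ -ε) →
    ¬ ∃ p ∈ Ω ×ˢ Ioc (0:ℝ) T,
        IsLocalMinOn (fun q : Eucl d × ℝ => u q - φ q.1 q.2) (Ω ×ˢ Ioc (0:ℝ) T) p ∧
        u p - φ p.1 p.2 = 0


/-- `HasSecondOrderExpansionAt f x p M` means
`f(y) = f(x) + ⟨p, y-x⟩ + ½⟨M(y-x), y-x⟩ + o(|y-x|²)` as `y → x`. -/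
def HasSecondOrderExpansionAt {d : ℕ} (f : Eucl d → ℝ) (x : Eucl d)
    (p : Eucl d) (M : Matrix (Fin d) (Fin d) ℝ) : Prop :=
  (fun y => f y - (f x + ⟪p, y - x⟫ + (1 / 2) * quadForm M (y - x)))
    =o[nhds x] fun y => ‖y - x‖ ^ 2

/-- A function `φ : ℝᵈ → ℝ` is semiconvex if `x ↦ φ(x) + c|x|²/2` is convex for some
`c ≥ 0`. -/
def Semiconvex {d : ℕ} (φ : Eucl d → ℝ) : Prop :=
  ∃ c : ℝ, 0 ≤ c ∧ ConvexOn ℝ univ fun x => φ x + c * ‖x‖ ^ 2 / 2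

section Subgradient

variable {E : Type*} [NormedAddCommGroup E] [InnerProductSpace ℝ E] {f : E → ℝ} {p q x y : E}

/-- `p` is a subgradient of `f` at `x`. The inequality is required on the whole space, as is
appropriate for functions that are convex and finite everywhere. -/
def HasSubgradientAt (f : E → ℝ) (p x : E) : Prop :=
  ∀ z, f x + ⟪p, z - x⟫ ≤ f z

lemma HasSubgradientAt.inner_sub_sub_nonneg (hp : HasSubgradientAt f p x)
    (hq : HasSubgradientAt f q y) : 0 ≤ ⟪p - q, x - y⟫ := by
  have hxy := hp y
  have hyx := hq x
  rw [← neg_sub x y, inner_neg_right] at hxy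
  rw [inner_sub_left]
  linarith

lemma HasSubgradientAt.comp_add_smul {v : E} {t : ℝ} (hp : HasSubgradientAt f p (x + t • v)) :
    HasSubgradientAt (fun s : ℝ => f (x + s • v)) ⟪p, v⟫ t := by
  intro s
  have hs := hp (x + s • v)
  rw [add_sub_add_left_eq_sub, ← sub_smul, real_inner_smul_right] at hs
  simpa using hs

lemma exists_hasSubgradientAt [CompleteSpace E] (hf : ConvexOn ℝ univ f) (hcont : Continuous f)
    (x : E) : ∃ p, HasSubgradientAt f p x := by
  have hconv : Convex ℝ {q : E × ℝ | f q.1 < q.2} := by simpa using hf.convex_strict_epigraph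
  have hopen : IsOpen {q : E × ℝ | f q.1 < q.2} :=
    isOpen_lt (hcont.comp continuous_fst) continuous_snd
  obtain ⟨L, hL⟩ := geometric_hahn_banach_open_point (x := (x, f x)) hconv hopen (by simp)
  let l : StrongDual ℝ E := L.comp (ContinuousLinearMap.inl ℝ E ℝ)
  have hsplit : ∀ z t, L (z, t) = l z + t * L (0, 1) := fun z t => by
    rw [← smul_eq_mul, ← map_smul, ContinuousLinearMap.comp_apply, ← map_add]
    simp
  have hslope : L (0, 1) < 0 := by
    have := hL (x, f x + 1) (by simp)
    rw [hsplit x, hsplit x] at this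
    linarith
  refine ⟨(InnerProductSpace.toDual ℝ E).symm ((-L (0, 1))⁻¹ • l), fun z => ?_⟩
  have habove : ∀ ε > 0, l z - l x ≤ -L (0, 1) * (f z - f x + ε) := fun ε hε => by
    have := hL (z, f z + ε) (by simpa using hε)
    rw [hsplit z, hsplit x] at this
    linarith
  have hdiv : (-L (0, 1))⁻¹ * (l z - l x) ≤ f z - f x := le_of_forall_pos_le_add fun ε hε =>
    (inv_mul_le_iff₀ (neg_pos.2 hslope)).2 (habove ε hε)
  rw [InnerProductSpace.toDual_symm_apply, smul_apply, smul_eq_mul, map_sub]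
  linarith

lemma hasSubgradientAt_neg_of_isMinOn_add [CompleteSpace E] {g : E → ℝ}
    (hf : ConvexOn ℝ univ f) (hg : HasGradientAt g p x) (hmin : IsMinOn (f + g) univ x) :
    HasSubgradientAt f (-p) x := by
  intro z
  -- Along the segment from `x` to `z`, replace `f` by its chord.
  let ψ : ℝ → ℝ := fun t => t * (f z - f x) + g (x + t • (z - x))
  have hψmin : IsMinOn ψ (Icc 0 1) 0 := fun t ht => by
    have hchord := hf.2 (mem_univ x) (mem_univ z) (sub_nonneg.2 ht.2) ht.1 (sub_add_cancel 1 t)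
    have hle : f x + g x ≤ f (x + t • (z - x)) + g (x + t • (z - x)) := hmin (mem_univ _)
    rw [show (1 - t) • x + t • z = x + t • (z - x) by module, smul_eq_mul, smul_eq_mul] at hchord
    simp only [mem_ofPred_eq, ψ, zero_mul, zero_smul, add_zero, zero_add]
    linarith
  have hψderiv : HasDerivAt ψ (f z - f x + ⟪p, z - x⟫) 0 := by
    have hline : HasDerivAt (fun t : ℝ => x + t • (z - x)) (z - x) 0 := by
      simpa using ((hasDerivAt_id (0 : ℝ)).smul_const (z - x)).const_add x
    have hg' : HasFDerivAt g (InnerProductSpace.toDual ℝ E p) (x + (0 : ℝ) • (z - x)) := by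
      simpa using hg.hasFDerivAt
    refine (((hasDerivAt_id (0 : ℝ)).mul_const (f z - f x)).add
      (hg'.comp_hasDerivAt 0 hline)).congr_deriv ?_
    simp
  have htangent : (1 : ℝ) ∈ posTangentConeAt (Icc 0 1) (0 : ℝ) :=
    mem_posTangentConeAt_of_segment_subset (by simp [segment_eq_Icc])
  have hnonneg := hψmin.localize.hasFDerivWithinAt_nonneg
    hψderiv.hasFDerivAt.hasFDerivWithinAt htangent
  simp only [ContinuousLinearMap.toSpanSingleton_apply, one_smul] at hnonneg
  rw [inner_neg_left]
  linarith

lemma hasGradientAt_of_continuousAt_subgradient [CompleteSpace E] {G : E → E}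
    (hG : ∀ z, HasSubgradientAt f (G z) z) (hcont : ContinuousAt G x) :
    HasGradientAt f (G x) x := by
  rw [hasGradientAt_iff_isLittleO]
  have hbound : ∀ z, ‖f z - f x - ⟪G x, z - x⟫‖ ≤ ‖G z - G x‖ * ‖z - x‖ := fun z => by
    have hlower := hG x z
    have hupper := hG z x
    have hcs := real_inner_le_norm (G z - G x) (z - x)
    rw [inner_sub_left] at hcs
    rw [← neg_sub z x, inner_neg_right] at hupper
    rw [Real.norm_of_nonneg (by linarith)]
    linarith
  have hsmall : (fun z => ‖G z - G x‖) =o[𝓝 x] fun _ => (1 : ℝ) := by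
    rw [isLittleO_one_iff, ← tendsto_iff_norm_sub_tendsto_zero]
    exact hcont
  refine (IsBigO.of_bound' (Eventually.of_forall fun z => ?_)).trans_isLittleO
    (g := fun z => ‖G z - G x‖ * ‖z - x‖) ?_
  · exact (hbound z).trans (le_abs_self _)
  · simpa using (hsmall.mul_isBigO (isBigO_refl (fun z => ‖z - x‖) (𝓝 x))).norm_right

lemma monotone_subgradient {φ γ : ℝ → ℝ} (hγ : ∀ t, HasSubgradientAt φ (γ t) t) : Monotone γ := by
  intro s t hst
  rcases hst.eq_or_lt with rfl | hlt
  · exact le_rfl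
  · have hnonneg := (hγ t).inner_sub_sub_nonneg (hγ s)
    rw [Real.inner_apply] at hnonneg
    exact sub_nonneg.1 (nonneg_of_mul_nonneg_left hnonneg (sub_pos.2 hlt))

lemma integral_subgradient_eq_sub {φ γ : ℝ → ℝ} (hφ : Continuous φ)
    (hγ : ∀ t, HasSubgradientAt φ (γ t) t) (a b : ℝ) : ∫ t in a..b, γ t = φ b - φ a :=
  integral_eq_of_hasDerivAt_off_countable φ γ (monotone_subgradient hγ).countable_not_continuousAt
    hφ.continuousOn (fun t ht => by
      simpa using (hasGradientAt_of_continuousAt_subgradient hγ (not_not.1 ht.2)).hasDerivAt)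
    (monotone_subgradient hγ).intervalIntegrable

end Subgradient

section FirmlyNonexpansive

variable {E : Type*} [NormedAddCommGroup E] [InnerProductSpace ℝ E] {P : E → E}

/-- Firmly nonexpansive maps, the class to which the proximal maps of convex functions belong. -/
def IsFirmlyNonexpansive (P : E → E) : Prop :=
  ∀ y z, ‖P y - P z‖ ^ 2 ≤ ⟪P y - P z, y - z⟫

lemma IsFirmlyNonexpansive.lipschitzWith (hP : IsFirmlyNonexpansive P) : LipschitzWith 1 P := by
  refine LipschitzWith.mk_one fun y z => ?_
  rw [dist_eq_norm, dist_eq_norm]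
  have hsq := (hP y z).trans (real_inner_le_norm _ _)
  by_contra! hlt
  nlinarith [norm_nonneg (y - z)]

lemma IsFirmlyNonexpansive.sq_norm_sub_lineMap_le (hP : IsFirmlyNonexpansive P) (y w : E) {t : ℝ}
    (ht : t ∈ Icc (0 : ℝ) 1) :
    ‖P (AffineMap.lineMap y w t) - P y‖ ^ 2 ≤ ‖P w - P y‖ * ‖AffineMap.lineMap y w t - y‖ := by
  set z : E := AffineMap.lineMap y w t with hz
  have hzy : z - y = t • (w - y) := by rw [hz, AffineMap.lineMap_apply_module']; abel
  have hwz : w - z = (1 - t) • (w - y) := by rw [hz, AffineMap.lineMap_apply_module']; module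
  have hmono : 0 ≤ ⟪P w - P z, w - y⟫ := by
    rcases ht.2.eq_or_lt with rfl | hlt
    · simp [hz]
    · have hnonneg := (sq_nonneg _).trans (hP w z)
      rw [hwz, real_inner_smul_right] at hnonneg
      exact nonneg_of_mul_nonneg_right hnonneg (sub_pos.2 hlt)
  calc ‖P z - P y‖ ^ 2 ≤ t * ⟪P z - P y, w - y⟫ := by
        rw [← real_inner_smul_right, ← hzy]; exact hP z y
    _ ≤ t * ⟪P w - P y, w - y⟫ := by
        rw [← sub_add_sub_cancel (P w) (P z) (P y), inner_add_left]
        exact mul_le_mul_of_nonneg_left (le_add_of_nonneg_left hmono) ht.1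
    _ = ⟪P w - P y, z - y⟫ := by rw [hzy, real_inner_smul_right]
    _ ≤ ‖P w - P y‖ * ‖z - y‖ := real_inner_le_norm _ _

lemma IsFirmlyNonexpansive.comap_nhds_le (hP : IsFirmlyNonexpansive P) {y : E}
    (hexp : (fun z => z - y) =O[𝓝 y] fun z => P z - P y) : comap P (𝓝 (P y)) ≤ 𝓝 y := by
  obtain ⟨C, hC, hbound⟩ := hexp.exists_pos
  obtain ⟨δ, hδ, hball⟩ := Metric.eventually_nhds_iff.1 hbound.bound
  rw [(nhds_basis_ball.comap P).le_basis_iff nhds_basis_ball]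
  intro ε hε
  obtain ⟨r, hr, hrmin⟩ := exists_between (lt_min hε hδ)
  obtain ⟨hrε, hrδ⟩ := lt_min_iff.1 hrmin
  refine ⟨r / C ^ 2, by positivity, fun w hw => ?_⟩
  by_contra hfar
  rw [mem_ball, not_lt, dist_eq_norm] at hfar
  have hwy : r ≤ ‖w - y‖ := hrε.le.trans hfar
  have hwy0 : 0 < ‖w - y‖ := hr.trans_le hwy
  -- The point of the segment from `y` to `w` at distance `r` from `y`.
  set z : E := AffineMap.lineMap y w (r / ‖w - y‖) with hz
  have hzy : ‖z - y‖ = r := by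
    rw [← dist_eq_norm, hz, dist_lineMap_left, Real.norm_of_nonneg (by positivity), dist_comm,
      dist_eq_norm, div_mul_cancel₀ _ hwy0.ne']
  have hsegment := hP.sq_norm_sub_lineMap_le y w ⟨by positivity, (div_le_one hwy0).2 hwy⟩
  have hexpand : r ≤ C * ‖P z - P y‖ := by
    simpa [hzy] using hball (y := z) (by rwa [dist_eq_norm, hzy])
  have hsq : r * r ≤ C ^ 2 * ‖P w - P y‖ * r := by
    calc r * r ≤ (C * ‖P z - P y‖) * (C * ‖P z - P y‖) := by gcongr
      _ = C ^ 2 * ‖P z - P y‖ ^ 2 := by ring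
      _ ≤ C ^ 2 * (‖P w - P y‖ * ‖z - y‖) := by gcongr
      _ = C ^ 2 * ‖P w - P y‖ * r := by rw [hzy]; ring
  have hclose : C ^ 2 * ‖P w - P y‖ < r := by
    rw [mem_preimage, mem_ball, dist_eq_norm, lt_div_iff₀ (by positivity)] at hw
    linarith
  exact (le_of_mul_le_mul_right hsq hr).not_gt hclose

lemma IsFirmlyNonexpansive.hasFDerivAt_rightInverse (hP : IsFirmlyNonexpansive P) {g : E → E}
    (hg : Function.RightInverse g P) {x : E} {T : E ≃L[ℝ] E}
    (hT : HasFDerivAt P (T : E →L[ℝ] E) (g x)) : HasFDerivAt g (T.symm : E →L[ℝ] E) x := by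
  have hexp : (fun z => z - g x) =O[𝓝 (g x)] fun z => P z - P (g x) :=
    (hT.isThetaTVS_sub T.toHomeomorph.isInducing).isTheta.isBigO_symm
  have hcont : ContinuousAt g x := by
    refine Tendsto.mono_right (tendsto_comap_iff.2 ?_) (hP.comap_nhds_le hexp)
    rw [hg.comp_eq_id, hg x]
    exact tendsto_id
  exact .of_local_left_inverse hcont hT (Eventually.of_forall hg)

end FirmlyNonexpansive

section RegularValues

variable {E : Type*} [NormedAddCommGroup E] [NormedSpace ℝ E] [FiniteDimensional ℝ E]
  [MeasurableSpace E] [BorelSpace E] (μ : Measure E) [μ.IsAddHaarMeasure] {K : NNReal} {P : E → E}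

lemma addHaar_image_eq_zero_of_lipschitzWith (hP : LipschitzWith K P) {s : Set E} (hs : μ s = 0) :
    μ (P '' s) = 0 := by
  let ν : Measure E := μH[Module.finrank ℝ E]
  have hνs : ν s = 0 := Measure.absolutelyContinuous_isAddHaarMeasure ν μ hs
  have hle : ν (P '' s) ≤ K ^ (Module.finrank ℝ E : ℝ) * ν s :=
    hP.hausdorffMeasure_image_le (Nat.cast_nonneg _) s
  refine Measure.absolutelyContinuous_isAddHaarMeasure μ ν (le_antisymm ?_ zero_le)
  simpa [hνs] using hle

lemma ae_forall_preimage_exists_hasFDerivAt_equiv (hP : LipschitzWith K P) :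
    ∀ᵐ x ∂μ, ∀ y, P y = x → ∃ T : E ≃L[ℝ] E, HasFDerivAt P (T : E →L[ℝ] E) y := by
  have hrademacher : μ (P '' {y | ¬ DifferentiableAt ℝ P y}) = 0 :=
    addHaar_image_eq_zero_of_lipschitzWith μ hP (ae_iff.1 hP.ae_differentiableAt)
  have hsard : μ (P '' {y | DifferentiableAt ℝ P y ∧ (fderiv ℝ P y).det = 0}) = 0 :=
    addHaar_image_eq_zero_of_det_fderivWithin_eq_zero μ
      (fun y hy => hy.1.hasFDerivAt.hasFDerivWithinAt) fun y hy => hy.2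
  filter_upwards [measure_eq_zero_iff_ae_notMem.1 hrademacher,
    measure_eq_zero_iff_ae_notMem.1 hsard] with x hx hx' y hy
  have hdiff : DifferentiableAt ℝ P y := not_not.1 fun h => hx ⟨y, h, hy⟩
  have hdet : (fderiv ℝ P y).det ≠ 0 := fun h => hx' ⟨y, ⟨hdiff, h⟩, hy⟩
  exact ⟨(fderiv ℝ P y).toContinuousLinearEquivOfDetNeZero hdet, by simpa using hdiff.hasFDerivAt⟩

end RegularValues

section Prox

variable {E : Type*} [NormedAddCommGroup E] [InnerProductSpace ℝ E] {f : E → ℝ} {P : E → E}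

/-- `P` is the proximal map of `f`, encoded as the resolvent `(I + ∂f)⁻¹` of the subdifferential
rather than by the minimisation of `f + ‖· - y‖² / 2`. -/
def IsProx (f : E → ℝ) (P : E → E) : Prop :=
  ∀ y, HasSubgradientAt f (y - P y) (P y)

lemma hasGradientAt_sq_norm_sub_div_two [CompleteSpace E] (x y : E) :
    HasGradientAt (fun z => ‖z - y‖ ^ 2 / 2) (x - y) x := by
  rw [hasGradientAt_iff_hasFDerivAt]
  simp only [div_eq_mul_inv]
  refine (((hasFDerivAt_id x).sub_const y).norm_sq.mul_const (2⁻¹ : ℝ)).congr_fderiv ?_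
  ext v
  simp

lemma exists_isMinOn_add_sq_norm_sub [FiniteDimensional ℝ E] (hf : ConvexOn ℝ univ f)
    (hcont : Continuous f) (y : E) :
    ∃ x, IsMinOn (f + fun z => ‖z - y‖ ^ 2 / 2) univ x := by
  have := FiniteDimensional.complete ℝ E
  obtain ⟨p, hp⟩ := exists_hasSubgradientAt hf hcont y
  have hfar : ∀ᶠ z in cocompact E, 2 * ‖p‖ < ‖z - y‖ := by
    filter_upwards [(isCompact_closedBall y (2 * ‖p‖)).compl_mem_cocompact] with z hz
    simpa [dist_eq_norm] using hz
  have hlarge : ∀ᶠ z in cocompact E, f y + ‖y - y‖ ^ 2 / 2 ≤ f z + ‖z - y‖ ^ 2 / 2 := by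
    filter_upwards [hfar] with z hz
    have hsub := hp z
    have hcs := neg_le_of_abs_le (abs_real_inner_le_norm p (z - y))
    simp only [sub_self, norm_zero]
    nlinarith [norm_nonneg (z - y)]
  obtain ⟨x, hx⟩ := Continuous.exists_forall_le' (f := fun z => f z + ‖z - y‖ ^ 2 / 2)
    (by fun_prop) y hlarge
  exact ⟨x, fun z _ => hx z⟩

lemma exists_isProx [FiniteDimensional ℝ E] (hf : ConvexOn ℝ univ f) (hcont : Continuous f) :
    ∃ P, IsProx f P := by
  have := FiniteDimensional.complete ℝ E
  choose P hP using exists_isMinOn_add_sq_norm_sub hf hcont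
  refine ⟨P, fun y => ?_⟩
  simpa using hasSubgradientAt_neg_of_isMinOn_add hf
    (hasGradientAt_sq_norm_sub_div_two (P y) y) (hP y)

lemma IsProx.isFirmlyNonexpansive (hP : IsProx f P) : IsFirmlyNonexpansive P := by
  intro y z
  have hmono := (hP y).inner_sub_sub_nonneg (hP z)
  rw [sub_sub_sub_comm, inner_sub_left, real_inner_self_eq_norm_sq, real_inner_comm] at hmono
  linarith

lemma IsProx.apply_add_eq (hP : IsProx f P) {p x : E} (hp : HasSubgradientAt f p x) :
    P (x + p) = x := by
  have hmono := (hP (x + p)).inner_sub_sub_nonneg hp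
  rw [show x + p - P (x + p) - p = -(P (x + p) - x) by abel, inner_neg_left, neg_nonneg] at hmono
  exact sub_eq_zero.1 (real_inner_self_nonpos.1 hmono)

lemma ae_differentiableAt_subgradient [FiniteDimensional ℝ E] [MeasurableSpace E] [BorelSpace E]
    (μ : Measure E) [μ.IsAddHaarMeasure] (hf : ConvexOn ℝ univ f) (hcont : Continuous f)
    {G : E → E} (hG : ∀ x, HasSubgradientAt f (G x) x) : ∀ᵐ x ∂μ, DifferentiableAt ℝ G x := by
  obtain ⟨P, hP⟩ := exists_isProx hf hcont
  have hinv : Function.RightInverse (fun x => x + G x) P := fun x => hP.apply_add_eq (hG x)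
  filter_upwards [ae_forall_preimage_exists_hasFDerivAt_equiv μ
    hP.isFirmlyNonexpansive.lipschitzWith] with x hx
  obtain ⟨T, hT⟩ := hx (x + G x) (hinv x)
  have hsum := (hP.isFirmlyNonexpansive.hasFDerivAt_rightInverse hinv hT).differentiableAt
  simpa using hsum.sub differentiableAt_id

end Prox

section QuadraticExpansion

variable {E : Type*} [NormedAddCommGroup E] [InnerProductSpace ℝ E] {f g : E → ℝ} {x p q : E}
  {A B : E →ₗ[ℝ] E}

/-- Coordinate-free version of `HasSecondOrderExpansionAt`; the operator `A` need not be symmetric,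
so that only its symmetric part is determined by `f`. -/
def HasQuadraticExpansionAt (f : E → ℝ) (x p : E) (A : E →ₗ[ℝ] E) : Prop :=
  (fun y => f y - (f x + ⟪p, y - x⟫ + (1 / 2) * ⟪A (y - x), y - x⟫)) =o[𝓝 x] fun y => ‖y - x‖ ^ 2

lemma HasQuadraticExpansionAt.sub (hf : HasQuadraticExpansionAt f x p A)
    (hg : HasQuadraticExpansionAt g x q B) :
    HasQuadraticExpansionAt (fun y => f y - g y) x (p - q) (A - B) := by
  refine (IsLittleO.sub hf hg).congr_left fun y => ?_
  rw [LinearMap.sub_apply, inner_sub_left, inner_sub_left]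
  ring

lemma hasQuadraticExpansionAt_mul_sq_norm_div_two (c : ℝ) (x : E) :
    HasQuadraticExpansionAt (fun y => c * ‖y‖ ^ 2 / 2) x (c • x) (c • LinearMap.id) := by
  refine (isLittleO_zero _ _).congr_left fun y => ?_
  have hexpand : ‖y‖ ^ 2 = ‖x‖ ^ 2 + 2 * ⟪x, y - x⟫ + ‖y - x‖ ^ 2 := by
    rw [← norm_add_sq_real, add_sub_cancel]
  rw [LinearMap.smul_apply, LinearMap.id_apply, real_inner_smul_left, real_inner_smul_left,
    real_inner_self_eq_norm_sq]
  simp only [hexpand]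
  ring

lemma HasQuadraticExpansionAt.exists_isSymmetric [FiniteDimensional ℝ E]
    (hf : HasQuadraticExpansionAt f x p A) :
    ∃ B : E →ₗ[ℝ] E, B.IsSymmetric ∧ HasQuadraticExpansionAt f x p B := by
  let B : E →ₗ[ℝ] E := selfAdjointPart ℝ A
  have hquad : ∀ v, ⟪B v, v⟫ = ⟪A v, v⟫ := fun v => by
    simp only [B, selfAdjointPart_apply_coe, LinearMap.smul_apply, LinearMap.add_apply,
      LinearMap.star_eq_adjoint, real_inner_smul_left, inner_add_left,
      LinearMap.adjoint_inner_left, real_inner_comm (A v) v, invOf_eq_inv]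
    ring
  refine ⟨B, (LinearMap.isSymmetric_iff_isSelfAdjoint B).2 (selfAdjointPart ℝ A).2, ?_⟩
  simpa only [HasQuadraticExpansionAt, hquad] using hf

lemma integral_inner_subgradient_remainder (hcont : Continuous f) {G : E → E}
    (hG : ∀ z, HasSubgradientAt f (G z) z) (L : E →L[ℝ] E) (x v : E) :
    ∫ t in (0 : ℝ)..1, ⟪G (x + t • v) - G x - L (t • v), v⟫ =
      f (x + v) - (f x + ⟪G x, v⟫ + (1 / 2) * ⟪L v, v⟫) := by
  have hsub : ∀ t : ℝ, HasSubgradientAt (fun s : ℝ => f (x + s • v)) ⟪G (x + t • v), v⟫ t :=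
    fun t => (hG (x + t • v)).comp_add_smul
  have hint : IntervalIntegrable (fun t : ℝ => ⟪G (x + t • v), v⟫) volume 0 1 :=
    (monotone_subgradient hsub).intervalIntegrable
  have hintegral : ∫ t in (0 : ℝ)..1, ⟪G (x + t • v), v⟫ = f (x + v) - f x := by
    simpa using integral_subgradient_eq_sub (by fun_prop) hsub 0 1
  simp_rw [inner_sub_left, map_smul, real_inner_smul_left]
  rw [intervalIntegral.integral_sub (hint.sub intervalIntegrable_const)
      (Continuous.intervalIntegrable (by fun_prop) 0 1),
    intervalIntegral.integral_sub hint intervalIntegrable_const, hintegral,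
    intervalIntegral.integral_const, intervalIntegral.integral_mul_const, integral_id]
  simp only [sub_zero, one_smul]
  ring

lemma hasQuadraticExpansionAt_of_hasFDerivAt_subgradient (hcont : Continuous f) {G : E → E}
    (hG : ∀ z, HasSubgradientAt f (G z) z) {G' : E →L[ℝ] E} (hG' : HasFDerivAt G G' x) :
    HasQuadraticExpansionAt f x (G x) G' := by
  refine isLittleO_iff.2 fun ε hε => ?_
  obtain ⟨δ, hδ, hball⟩ := Metric.eventually_nhds_iff_ball.1 (isLittleO_iff.1 hG'.isLittleO hε)
  filter_upwards [ball_mem_nhds x hδ] with y hy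
  set v : E := y - x with hv
  have hbound : ∀ t ∈ uIoc (0 : ℝ) 1,
      ‖⟪G (x + t • v) - G x - G' (t • v), v⟫‖ ≤ ε * ‖v‖ * ‖v‖ := by
    intro t ht
    rw [uIoc_of_le zero_le_one] at ht
    have hshort : ‖t • v‖ ≤ ‖v‖ := by
      rw [norm_smul, Real.norm_of_nonneg ht.1.le]
      exact mul_le_of_le_one_left (norm_nonneg v) ht.2
    have hmem : x + t • v ∈ ball x δ := by
      rw [mem_ball_iff_norm, add_sub_cancel_left]
      exact hshort.trans_lt (mem_ball_iff_norm.1 hy)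
    have hlin := hball _ hmem
    rw [add_sub_cancel_left] at hlin
    calc ‖⟪G (x + t • v) - G x - G' (t • v), v⟫‖
        ≤ ‖G (x + t • v) - G x - G' (t • v)‖ * ‖v‖ := norm_inner_le_norm _ _
      _ ≤ ε * ‖t • v‖ * ‖v‖ := by gcongr
      _ ≤ ε * ‖v‖ * ‖v‖ := by gcongr
  have hremainder := integral_inner_subgradient_remainder hcont hG G' x v
  rw [hv, add_sub_cancel, ← hv] at hremainder
  rw [ContinuousLinearMap.coe_coe, ← hremainder, norm_pow, norm_norm]
  simpa [sq, mul_assoc] using intervalIntegral.norm_integral_le_of_norm_le_const hbound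

lemma ae_exists_hasQuadraticExpansionAt [FiniteDimensional ℝ E] [MeasurableSpace E] [BorelSpace E]
    (μ : Measure E) [μ.IsAddHaarMeasure] (hf : ConvexOn ℝ univ f) :
    ∀ᵐ x ∂μ, ∃ (p : E) (A : E →ₗ[ℝ] E), HasQuadraticExpansionAt f x p A := by
  have := FiniteDimensional.complete ℝ E
  have hcont : Continuous f := continuousOn_univ.1 (hf.continuousOn isOpen_univ)
  choose G hG using exists_hasSubgradientAt hf hcont
  filter_upwards [ae_differentiableAt_subgradient μ hf hcont hG] with x hx
  exact ⟨G x, _, hasQuadraticExpansionAt_of_hasFDerivAt_subgradient hcont hG hx.hasFDerivAt⟩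

theorem aleksandrov_theorem_general [FiniteDimensional ℝ E] [MeasurableSpace E] [BorelSpace E]
    (μ : Measure E) [μ.IsAddHaarMeasure] {φ : E → ℝ} {c : ℝ}
    (hφ : ConvexOn ℝ univ fun x => φ x + c * ‖x‖ ^ 2 / 2) :
    ∀ᵐ x ∂μ, ∃ (p : E) (A : E →ₗ[ℝ] E), A.IsSymmetric ∧ HasQuadraticExpansionAt φ x p A := by
  filter_upwards [ae_exists_hasQuadraticExpansionAt μ hφ] with x ⟨p, A, hA⟩
  have hsub := hA.sub (hasQuadraticExpansionAt_mul_sq_norm_div_two c x)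
  simp only [add_sub_cancel_right] at hsub
  exact ⟨p - c • x, hsub.exists_isSymmetric⟩

end QuadraticExpansion

section Coordinates

variable {d : ℕ} {f : Eucl d → ℝ} {x p : Eucl d} {A : Eucl d →ₗ[ℝ] Eucl d}

lemma quadForm_eq_inner (M : Matrix (Fin d) (Fin d) ℝ) (v : Eucl d) :
    quadForm M v = ⟪M.toEuclideanLin v, v⟫ := by
  simp only [quadForm, PiLp.inner_apply, Matrix.ofLp_toLpLin, Matrix.toLin'_apply,
    Matrix.mulVec, dotProduct, Real.inner_apply, Finset.sum_mul]
  exact Finset.sum_congr rfl fun i _ => Finset.sum_congr rfl fun j _ => by ring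

lemma HasQuadraticExpansionAt.hasSecondOrderExpansionAt (h : HasQuadraticExpansionAt f x p A) :
    HasSecondOrderExpansionAt f x p (Matrix.toEuclideanLin.symm A) := by
  simpa only [HasQuadraticExpansionAt, HasSecondOrderExpansionAt, quadForm_eq_inner,
    LinearEquiv.apply_symm_apply] using h

lemma isSymm_toEuclideanLin_symm (hA : A.IsSymmetric) :
    (Matrix.toEuclideanLin.symm A).IsSymm := by
  rw [← Matrix.isHermitian_iff_isSymm, ← Matrix.isSymmetric_toEuclideanLin_iff,
    LinearEquiv.apply_symm_apply]
  exact hA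

end Coordinates

/-- **Aleksandrov's theorem.**  A semiconvex function `φ : ℝᵈ → ℝ` is twice differentiable
almost everywhere: for a.e. `x₀` there are `p` and a symmetric matrix `A` with
`φ(x) = φ(x₀) + ⟨p, x-x₀⟩ + ½⟨A(x-x₀), x-x₀⟩ + o(|x-x₀|²)`. -/
theorem aleksandrov_theorem (d : ℕ) (φ : Eucl d → ℝ) (hφ : Semiconvex φ) :
    ∀ᵐ x₀ ∂(volume : Measure (Eucl d)),
      ∃ (p : Eucl d) (A : Matrix (Fin d) (Fin d) ℝ), A.IsSymm ∧
        HasSecondOrderExpansionAt φ x₀ p A := by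
  obtain ⟨c, -, hc⟩ := hφ
  exact (aleksandrov_theorem_general volume hc).mono fun x₀ ⟨p, A, hA, hexp⟩ =>
    ⟨p, Matrix.toEuclideanLin.symm A, isSymm_toEuclideanLin_symm hA, hexp.hasSecondOrderExpansionAt⟩

end
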